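/- Decomposition of the kick-error into two-body and three-body contributions (paper eqs. 20a–20b): let V = Σ_{i<j} V_ij be the total potential energy. At every phase-space point where all pairwise separations are nonzero, {{T, V}, V} = Σ_{i<j} {{T, V_ij}, V_ij} + 2 Σ_{i<j<k} ( {{T, V_ij}, V_ik} + {{T, V_jk}, V_ji} + {{T, V_ki}, V_kj} ), where V_ji = V_ij. -/

import Mathlib

open scoped RealInnerProductSpace BigOperators

noncomputable section

/-- Three-dimensional Euclidean space. -/
abbrev E3 : Type := EuclideanSpace ℝ (Fin 3)

/-- Phase space for `N` particles: positions and momenta. -/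
abbrev Phase (N : ℕ) : Type := (Fin N → E3) × (Fin N → E3)

/-- Gradient of a phase-space function with respect to the `k`-th position. -/
def gradPos {N : ℕ} (A : Phase N → ℝ) (k : Fin N) (w : Phase N) : E3 :=
  gradient (fun y => A (Function.update w.1 k y, w.2)) (w.1 k)

/-- Gradient of a phase-space function with respect to the `k`-th momentum. -/
def gradMom {N : ℕ} (A : Phase N → ℝ) (k : Fin N) (w : Phase N) : E3 :=
  gradient (fun y => A (w.1, Function.update w.2 k y)) (w.2 k)

/-- Canonical Poisson bracket of two phase-space functions. -/
def poisson {N : ℕ} (A B : Phase N → ℝ) (w : Phase N) : ℝ :=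
  ∑ k, (⟪gradPos A k w, gradMom B k w⟫ - ⟪gradMom A k w, gradPos B k w⟫)

/-- Kinetic energy `T = Σ_i ‖p_i‖²/(2 m_i)`. -/
def kinetic {N : ℕ} (m : Fin N → ℝ) (w : Phase N) : ℝ :=
  ∑ i, ‖w.2 i‖ ^ 2 / (2 * m i)

/-- Pair potential `V_ij = −G m_i m_j / ‖x_i − x_j‖`. -/
def pairPot {N : ℕ} (G : ℝ) (m : Fin N → ℝ) (i j : Fin N) (w : Phase N) : ℝ :=
  -(G * m i * m j) / ‖w.1 i - w.1 j‖

/-!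
For potentials `U`, `W` depending on positions only, `{T, U}` is linear in the momenta, so
`{{T, U}, W} = Σ_k μ_k ⟪∇_{x_k} U, ∇_{x_k} W⟫` with `μ_k = 1 / m_k`, a symmetric bilinear form.
Since `∇_{x_i} V` only sees the pairs containing `i`, `{{T, V}, V}` is a sum over a particle `i` and
two partners `j, k ≠ i`. The terms with `j = k` are the two-body contributions. The others run over
ordered triples of distinct particles, and each `i < j < k` accounts for six of them, which agree in
pairs by symmetry of the inner product.
-/

open Finset

section TripleSums

variable {α M : Type*} [LinearOrder α] [Fintype α] [LocallyFiniteOrderTop α]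
  [LocallyFiniteOrderBot α] [AddCommMonoid M]

lemma sum_compl_pair_eq_sum_Iio_add_Ioo_add_Ioi [LocallyFiniteOrder α]
    {i j : α} (hij : i < j) (f : α → M) :
    ∑ k ∈ {i, j}ᶜ, f k = ∑ k ∈ Iio i, f k + ∑ k ∈ Ioo i j, f k + ∑ k ∈ Ioi j, f k := by
  have hunion : ({i, j}ᶜ : Finset α) = (Iio i ∪ Ioo i j) ∪ Ioi j := by
    ext k
    simp only [mem_compl, mem_insert, mem_singleton, mem_union, mem_Iio, mem_Ioo, mem_Ioi]
    grind
  have hlow : Disjoint (Iio i) (Ioo i j) := by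
    simp only [disjoint_left, mem_Iio, mem_Ioo]
    grind
  have hhigh : Disjoint (Iio i ∪ Ioo i j) (Ioi j) := by
    simp only [disjoint_left, mem_union, mem_Iio, mem_Ioo, mem_Ioi]
    grind
  rw [hunion, sum_union hhigh, sum_union hlow]

lemma sum_sum_Ioi_sum_compl_pair (f : α → α → α → M) :
    ∑ i, ∑ j ∈ Ioi i, ∑ k ∈ {i, j}ᶜ, f i j k =
      ∑ i, ∑ j ∈ Ioi i, ∑ k ∈ Ioi j, (f j k i + f i k j + f i j k) := by
  let : LocallyFiniteOrder α := Fintype.toLocallyFiniteOrder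
  have low : ∑ i, ∑ j ∈ Ioi i, ∑ k ∈ Iio i, f i j k =
      ∑ i, ∑ j ∈ Ioi i, ∑ k ∈ Ioi j, f j k i := by
    simp_rw [fun i ↦ sum_comm (s := Ioi i) (t := Iio i)]
    exact sum_comm' (by simp)
  have middle : ∀ i, ∑ j ∈ Ioi i, ∑ k ∈ Ioo i j, f i j k =
      ∑ j ∈ Ioi i, ∑ k ∈ Ioi j, f i k j := fun i ↦
    sum_comm' (by simp only [mem_Ioi, mem_Ioo]; grind)
  have split : ∑ i, ∑ j ∈ Ioi i, ∑ k ∈ {i, j}ᶜ, f i j k = ∑ i, ∑ j ∈ Ioi i,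
      (∑ k ∈ Iio i, f i j k + ∑ k ∈ Ioo i j, f i j k + ∑ k ∈ Ioi j, f i j k) :=
    sum_congr rfl fun i _ ↦ sum_congr rfl fun j hj ↦
      sum_compl_pair_eq_sum_Iio_add_Ioo_add_Ioi (mem_Ioi.1 hj) _
  rw [split]
  simp only [sum_add_distrib, low, middle]

lemma sum_sum_compl_sum_compl_pair (f : α → α → α → M) :
    ∑ i, ∑ j ∈ {i}ᶜ, ∑ k ∈ {i, j}ᶜ, f i j k =
      ∑ i, ∑ j ∈ Ioi i, ∑ k ∈ Ioi j,
        (f i j k + f i k j + f j i k + f j k i + f k i j + f k j i) := by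
  calc ∑ i, ∑ j ∈ {i}ᶜ, ∑ k ∈ {i, j}ᶜ, f i j k
      = ∑ i, ∑ j ∈ Ioi i, ∑ k ∈ {i, j}ᶜ, (f i j k + f j i k) := by
        rw [← sum_sum_Ioi_add_eq_sum_sum_off_diag fun j i ↦ ∑ k ∈ {i, j}ᶜ, f i j k]
        simp only [sum_add_distrib, pair_comm]
    _ = _ := by
        rw [sum_sum_Ioi_sum_compl_pair fun i j k ↦ f i j k + f j i k]
        simp only [sum_add_distrib]
        abel

lemma sum_sum_compl_sum_compl_of_symm (f : α → α → α → M) (hf : ∀ i j k, f i j k = f i k j) :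
    ∑ i, ∑ j ∈ {i}ᶜ, ∑ k ∈ {i}ᶜ, f i j k =
      ∑ i, ∑ j ∈ Ioi i, (f i j j + f j i i) +
        2 • ∑ i, ∑ j ∈ Ioi i, ∑ k ∈ Ioi j, (f i j k + f j k i + f k i j) := by
  have diagonal : ∑ i, ∑ j ∈ {i}ᶜ, f i j j = ∑ i, ∑ j ∈ Ioi i, (f i j j + f j i i) :=
    (sum_sum_Ioi_add_eq_sum_sum_off_diag fun j i ↦ f i j j).symm
  have distinct : ∑ i, ∑ j ∈ {i}ᶜ, ∑ k ∈ {i, j}ᶜ, f i j k =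
      2 • ∑ i, ∑ j ∈ Ioi i, ∑ k ∈ Ioi j, (f i j k + f j k i + f k i j) := by
    simp only [sum_sum_compl_sum_compl_pair, smul_sum]
    refine sum_congr rfl fun i _ ↦ sum_congr rfl fun j _ ↦ sum_congr rfl fun k _ ↦ ?_
    rw [hf i k j, hf j i k, hf k j i]
    abel
  have split : ∀ i, ∀ j ∈ ({i}ᶜ : Finset α),
      ∑ k ∈ {i}ᶜ, f i j k = f i j j + ∑ k ∈ {i, j}ᶜ, f i j k := fun i j hj ↦ by
    rw [← add_sum_erase _ _ hj, ← compl_insert, pair_comm]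
  rw [sum_congr rfl fun i _ ↦ sum_congr rfl (split i), ← diagonal, ← distinct]
  simp only [sum_add_distrib]

lemma sum_sum_Ioi_eq_sum_compl_singleton (k : α) (f : α → α → M) (hf : ∀ i j, f i j = f j i)
    (hk : ∀ i j, i ≠ k → j ≠ k → f i j = 0) :
    ∑ i, ∑ j ∈ Ioi i, f i j = ∑ j ∈ {k}ᶜ, f k j := by
  calc ∑ i, ∑ j ∈ Ioi i, f i j
      = ∑ i, ∑ j ∈ Ioi i, ((if i = k then f i j else 0) + if j = k then f j i else 0) := by
        refine sum_congr rfl fun i _ ↦ sum_congr rfl fun j hj ↦ ?_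
        have hij : i ≠ j := (mem_Ioi.1 hj).ne
        grind [add_zero, zero_add]
    _ = ∑ i, ∑ j ∈ {i}ᶜ, if i = k then f i j else 0 :=
        sum_sum_Ioi_add_eq_sum_sum_off_diag fun j i ↦ if i = k then f i j else 0
    _ = ∑ j ∈ {k}ᶜ, f k j := by
        rw [Fintype.sum_eq_single k fun i hi ↦ by simp [hi]]
        simp

end TripleSums

section Gradient

variable {F : Type*} [NormedAddCommGroup F] [InnerProductSpace ℝ F] [CompleteSpace F]

lemma gradient_fun_add_const (f : F → ℝ) (c : ℝ) (x : F) :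
    gradient (fun y ↦ f y + c) x = gradient f x := by
  simp [gradient]

lemma gradient_fun_sum {ι : Type*} {s : Finset ι} {f : ι → F → ℝ} {x : F}
    (hf : ∀ i ∈ s, DifferentiableAt ℝ (f i) x) :
    gradient (fun y ↦ ∑ i ∈ s, f i y) x = ∑ i ∈ s, gradient (f i) x := by
  simp only [gradient, fderiv_fun_sum hf, map_sum]

lemma gradient_inner_right (a x : F) : gradient (fun y ↦ ⟪a, y⟫) x = a :=
  HasGradientAt.gradient (InnerProductSpace.toDual ℝ F a).hasFDerivAt

lemma gradient_norm_sq_div_two_mul (c : ℝ) (x : F) :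
    gradient (fun y ↦ ‖y‖ ^ 2 / (2 * c)) x = c⁻¹ • x := by
  refine HasGradientAt.gradient (hasGradientAt_iff_hasFDerivAt.2 ?_)
  simp only [div_eq_mul_inv]
  refine ((hasStrictFDerivAt_norm_sq x).hasFDerivAt.mul_const (2 * c)⁻¹).congr_fderiv ?_
  ext v
  simp only [mul_inv_rev, smul_apply, coe_innerSL_apply, nsmul_eq_mul, Nat.cast_ofNat,
    smul_eq_mul, map_smul, InnerProductSpace.toDual_apply_apply]
  ring

end Gradient

section PartialGradients

variable {N : ℕ}

/-- Differentiability at `w` in the `k`-th position alone, which is what makes `gradPos A k w`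
meaningful. -/
def PosDifferentiableAt (A : Phase N → ℝ) (k : Fin N) (w : Phase N) : Prop :=
  DifferentiableAt ℝ (fun y ↦ A (Function.update w.1 k y, w.2)) (w.1 k)

section Sum

variable {ι : Type*} {s : Finset ι} {A : ι → Phase N → ℝ} {k : Fin N} {w : Phase N}

lemma PosDifferentiableAt.fun_sum (hA : ∀ i ∈ s, PosDifferentiableAt (A i) k w) :
    PosDifferentiableAt (fun w ↦ ∑ i ∈ s, A i w) k w :=
  DifferentiableAt.fun_sum hA

lemma gradPos_fun_sum (hA : ∀ i ∈ s, PosDifferentiableAt (A i) k w) :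
    gradPos (fun w ↦ ∑ i ∈ s, A i w) k w = ∑ i ∈ s, gradPos (A i) k w :=
  gradient_fun_sum hA

end Sum

lemma gradMom_of_separable {A : Phase N → ℝ} {w : Phase N} (ψ : Fin N → E3 → ℝ)
    (hA : ∀ p, A (w.1, p) = ∑ i, ψ i (p i)) (k : Fin N) :
    gradMom A k w = gradient (ψ k) (w.2 k) := by
  have hslice : (fun y ↦ A (w.1, Function.update w.2 k y)) =
      fun y ↦ ψ k y + ∑ i ∈ univ.erase k, ψ i (w.2 i) := by
    funext y
    rw [hA, ← add_sum_erase _ _ (mem_univ k), Function.update_self]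
    congr 1
    exact sum_congr rfl fun i hi ↦ by rw [Function.update_of_ne (ne_of_mem_erase hi)]
  rw [gradMom, hslice, gradient_fun_add_const]

lemma gradMom_kinetic (m : Fin N → ℝ) (k : Fin N) (w : Phase N) :
    gradMom (kinetic m) k w = (m k)⁻¹ • w.2 k := by
  rw [gradMom_of_separable (fun i y ↦ ‖y‖ ^ 2 / (2 * m i)) fun _ ↦ rfl,
    gradient_norm_sq_div_two_mul]

end PartialGradients

section KineticBracket

variable {N : ℕ}

/-- Independence of the momenta: the phase-space functions that are potential energies. -/
def IsPotential (U : Phase N → ℝ) : Prop := ∀ x p q, U (x, p) = U (x, q)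

variable {T U W : Phase N → ℝ} {μ : Fin N → ℝ}

namespace IsPotential

lemma gradMom_eq_zero (hU : IsPotential U) (k : Fin N) (w : Phase N) : gradMom U k w = 0 := by
  simp only [gradMom, hU w.1 _ w.2, gradient_fun_const]

lemma gradPos_eq (hU : IsPotential U) (k : Fin N) (x p q : Fin N → E3) :
    gradPos U k (x, p) = gradPos U k (x, q) := by
  simp only [gradPos, hU _ p q]

lemma poisson_eq (hU : IsPotential U) (w : Phase N) :
    poisson T U w = ∑ k, -⟪gradMom T k w, gradPos U k w⟫ := by
  simp only [poisson, hU.gradMom_eq_zero, inner_zero_right, zero_sub]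

lemma gradMom_poisson (hU : IsPotential U) (hT : ∀ k w, gradMom T k w = μ k • w.2 k)
    (k : Fin N) (w : Phase N) :
    gradMom (poisson T U) k w = -μ k • gradPos U k w := by
  have hlinear : ∀ p, poisson T U (w.1, p) = ∑ i, ⟪-μ i • gradPos U i w, p i⟫ := fun p ↦ by
    rw [hU.poisson_eq]
    refine sum_congr rfl fun i _ ↦ ?_
    rw [hT, hU.gradPos_eq i w.1 p w.2, real_inner_smul_left, real_inner_smul_left, real_inner_comm,
      neg_mul]
  rw [gradMom_of_separable _ hlinear, gradient_inner_right]

lemma poisson_poisson (hU : IsPotential U) (hW : IsPotential W)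
    (hT : ∀ k w, gradMom T k w = μ k • w.2 k) (w : Phase N) :
    poisson (poisson T U) W w = ∑ k, μ k * ⟪gradPos U k w, gradPos W k w⟫ := by
  simp only [hW.poisson_eq, hU.gradMom_poisson hT, real_inner_smul_left, neg_mul, neg_neg]

end IsPotential

end KineticBracket

section PairInteraction

variable {N : ℕ}

/-- A family of potentials `U i j` attached to unordered pairs of particles, each depending only on
the positions of its two particles. Nothing is asked of the self-interactions `U i i`, which do not
enter the total potential. -/
structure IsPairInteraction (U : Fin N → Fin N → Phase N → ℝ) : Prop where
  symm : ∀ i j, U i j = U j i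
  congr_pos : ∀ i j (w w' : Phase N), w.1 i = w'.1 i → w.1 j = w'.1 j → U i j w = U i j w'

/-- The total potential `Σ_{i<j} U_ij` of a pair interaction. -/
def totalPotential (U : Fin N → Fin N → Phase N → ℝ) (w : Phase N) : ℝ :=
  ∑ i, ∑ j ∈ Ioi i, U i j w

/-- The number `μ_i ⟪∇_{x_i} U_ij, ∇_{x_i} U_ik⟫` coupling the forces that the partners `j` and `k`
exert on particle `i`, where `μ` stands for the inverse masses. -/
def forceCoupling (μ : Fin N → ℝ) (U : Fin N → Fin N → Phase N → ℝ) (w : Phase N)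
    (i j k : Fin N) : ℝ :=
  μ i * ⟪gradPos (U i j) i w, gradPos (U i k) i w⟫

lemma forceCoupling_comm (μ : Fin N → ℝ) (U : Fin N → Fin N → Phase N → ℝ) (w : Phase N)
    (i j k : Fin N) : forceCoupling μ U w i j k = forceCoupling μ U w i k j := by
  rw [forceCoupling, forceCoupling, real_inner_comm]

namespace IsPairInteraction

variable {U : Fin N → Fin N → Phase N → ℝ} {T : Phase N → ℝ} {μ : Fin N → ℝ} {w : Phase N}

lemma isPotential (hU : IsPairInteraction U) (i j : Fin N) : IsPotential (U i j) :=
  fun _ _ _ ↦ hU.congr_pos i j _ _ rfl rfl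

lemma isPotential_totalPotential (hU : IsPairInteraction U) : IsPotential (totalPotential U) :=
  fun x p q ↦ by simp only [totalPotential, hU.isPotential _ _ x p q]

lemma update_eq (hU : IsPairInteraction U) {i j k : Fin N} (hi : i ≠ k) (hj : j ≠ k) (y : E3) :
    U i j (Function.update w.1 k y, w.2) = U i j w :=
  hU.congr_pos i j _ _ (Function.update_of_ne hi _ _) (Function.update_of_ne hj _ _)

lemma gradPos_eq_zero (hU : IsPairInteraction U) {i j k : Fin N} (hi : i ≠ k) (hj : j ≠ k) :
    gradPos (U i j) k w = 0 := by
  simp only [gradPos, hU.update_eq hi hj, gradient_fun_const]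

lemma posDifferentiableAt (hU : IsPairInteraction U)
    (hd : ∀ i j, i ≠ j → PosDifferentiableAt (U i j) i w)
    {i j : Fin N} (hij : i ≠ j) (k : Fin N) :
    PosDifferentiableAt (U i j) k w := by
  by_cases hi : i = k
  · exact hi ▸ hd i j hij
  by_cases hj : j = k
  · rw [hU.symm i j]
    exact hj ▸ hd j i hij.symm
  simp only [PosDifferentiableAt, hU.update_eq hi hj, differentiableAt_const]

lemma gradPos_totalPotential (hU : IsPairInteraction U)
    (hd : ∀ i j, i ≠ j → PosDifferentiableAt (U i j) i w)
    (k : Fin N) :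
    gradPos (totalPotential U) k w = ∑ j ∈ {k}ᶜ, gradPos (U k j) k w := by
  have hslice : ∀ i, ∀ j ∈ Ioi i, PosDifferentiableAt (U i j) k w :=
    fun i j hj ↦ hU.posDifferentiableAt hd (mem_Ioi.1 hj).ne k
  calc gradPos (totalPotential U) k w
      = ∑ i, gradPos (fun w ↦ ∑ j ∈ Ioi i, U i j w) k w :=
        gradPos_fun_sum fun i _ ↦ .fun_sum (hslice i)
    _ = ∑ i, ∑ j ∈ Ioi i, gradPos (U i j) k w :=
        sum_congr rfl fun i _ ↦ gradPos_fun_sum (hslice i)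
    _ = ∑ j ∈ {k}ᶜ, gradPos (U k j) k w :=
        sum_sum_Ioi_eq_sum_compl_singleton k _ (fun i j ↦ by rw [hU.symm i j])
          fun _ _ ↦ hU.gradPos_eq_zero

lemma poisson_poisson_totalPotential (hU : IsPairInteraction U)
    (hT : ∀ k w, gradMom T k w = μ k • w.2 k)
    (hd : ∀ i j, i ≠ j → PosDifferentiableAt (U i j) i w) :
    poisson (poisson T (totalPotential U)) (totalPotential U) w =
      ∑ i, ∑ j ∈ {i}ᶜ, ∑ k ∈ {i}ᶜ, forceCoupling μ U w i j k := by
  have hV := hU.isPotential_totalPotential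
  rw [hV.poisson_poisson hV hT]
  refine sum_congr rfl fun i _ ↦ ?_
  simp only [hU.gradPos_totalPotential hd, sum_inner, inner_sum, mul_sum, forceCoupling]
  exact sum_comm

lemma poisson_poisson_self (hU : IsPairInteraction U) (hT : ∀ k w, gradMom T k w = μ k • w.2 k)
    {i j : Fin N} (hij : i ≠ j) :
    poisson (poisson T (U i j)) (U i j) w =
      forceCoupling μ U w i j j + forceCoupling μ U w j i i := by
  rw [(hU.isPotential i j).poisson_poisson (hU.isPotential i j) hT,
    Fintype.sum_eq_add i j hij fun k hk ↦ by
      rw [hU.gradPos_eq_zero hk.1.symm hk.2.symm, inner_zero_left, mul_zero],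
    forceCoupling, forceCoupling, hU.symm j i]

lemma poisson_poisson_of_ne (hU : IsPairInteraction U) (hT : ∀ k w, gradMom T k w = μ k • w.2 k)
    {i j k : Fin N} (hjk : j ≠ k) :
    poisson (poisson T (U i j)) (U i k) w = forceCoupling μ U w i j k := by
  rw [(hU.isPotential i j).poisson_poisson (hU.isPotential i k) hT, forceCoupling]
  refine Fintype.sum_eq_single i fun l hl ↦ ?_
  by_cases hj : j = l
  · rw [hU.gradPos_eq_zero (j := k) hl.symm (hj ▸ hjk.symm), inner_zero_right, mul_zero]
  · rw [hU.gradPos_eq_zero hl.symm hj, inner_zero_left, mul_zero]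

end IsPairInteraction

lemma isPairInteraction_pairPot (G : ℝ) (m : Fin N → ℝ) : IsPairInteraction (pairPot G m) where
  symm i j := by
    funext w
    rw [pairPot, pairPot, norm_sub_rev, mul_right_comm]
  congr_pos i j w w' hi hj := by rw [pairPot, pairPot, hi, hj]

lemma posDifferentiableAt_pairPot (G : ℝ) (m : Fin N → ℝ) {i j : Fin N} {w : Phase N}
    (hij : i ≠ j) (hr : w.1 i - w.1 j ≠ 0) :
    PosDifferentiableAt (pairPot G m i j) i w := by
  simp only [PosDifferentiableAt, pairPot, Function.update_self, Function.update_of_ne hij.symm]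
  have hnorm : DifferentiableAt ℝ (fun y ↦ ‖y - w.1 j‖) (w.1 i) :=
    (differentiableAt_id.sub_const (w.1 j)).norm ℝ hr
  simp only [div_eq_mul_inv]
  exact (hnorm.inv (norm_ne_zero_iff.2 hr)).const_mul _

end PairInteraction

/-- `hT` says that particle `k` has velocity `μ k • p_k` under the Hamiltonian `T`. -/
theorem kick_error_decomposition_general {N : ℕ} {T : Phase N → ℝ} {μ : Fin N → ℝ}
    (hT : ∀ k w, gradMom T k w = μ k • w.2 k) {U : Fin N → Fin N → Phase N → ℝ}
    (hU : IsPairInteraction U) {w : Phase N}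
    (hd : ∀ i j, i ≠ j → PosDifferentiableAt (U i j) i w) :
    poisson (poisson T (totalPotential U)) (totalPotential U) w =
      (∑ i, ∑ j ∈ Ioi i, poisson (poisson T (U i j)) (U i j) w) +
      2 * ∑ i, ∑ j ∈ Ioi i, ∑ k ∈ Ioi j,
        (poisson (poisson T (U i j)) (U i k) w + poisson (poisson T (U j k)) (U j i) w +
          poisson (poisson T (U k i)) (U k j) w) := by
  rw [hU.poisson_poisson_totalPotential hT hd,
    sum_sum_compl_sum_compl_of_symm _ (forceCoupling_comm μ U w), nsmul_eq_mul, Nat.cast_ofNat]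
  congr 1
  · refine sum_congr rfl fun i _ ↦ sum_congr rfl fun j hj ↦ ?_
    exact (hU.poisson_poisson_self hT (mem_Ioi.1 hj).ne).symm
  · congr 1
    refine sum_congr rfl fun i _ ↦ sum_congr rfl fun j hj ↦ sum_congr rfl fun k hk ↦ ?_
    have hij := mem_Ioi.1 hj
    have hjk := mem_Ioi.1 hk
    rw [hU.poisson_poisson_of_ne hT hjk.ne, hU.poisson_poisson_of_ne hT (hij.trans hjk).ne',
      hU.poisson_poisson_of_ne hT hij.ne]

/-- Decomposition of the kick-error into two-body and three-body contributions
(paper eqs. 20a–20b): with `V = Σ_{i<j} V_ij`,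
`{{T,V},V} = Σ_{i<j} {{T,V_ij},V_ij}
  + 2 Σ_{i<j<k} ({{T,V_ij},V_ik} + {{T,V_jk},V_ji} + {{T,V_ki},V_kj})`
wherever all pairwise separations are nonzero. -/
theorem kick_error_decomposition {N : ℕ} (G : ℝ) (hG : 0 < G)
    (m : Fin N → ℝ) (hm : ∀ i, 0 < m i) (w : Phase N)
    (hr : ∀ i j : Fin N, i ≠ j → ‖w.1 i - w.1 j‖ ≠ 0) :
    poisson
        (poisson (kinetic m)
          (fun w' => ∑ i, ∑ j ∈ Finset.Ioi i, pairPot G m i j w'))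
        (fun w' => ∑ i, ∑ j ∈ Finset.Ioi i, pairPot G m i j w') w =
      (∑ i, ∑ j ∈ Finset.Ioi i,
        poisson (poisson (kinetic m) (pairPot G m i j)) (pairPot G m i j) w) +
      2 * ∑ i, ∑ j ∈ Finset.Ioi i, ∑ k ∈ Finset.Ioi j,
        (poisson (poisson (kinetic m) (pairPot G m i j)) (pairPot G m i k) w +
         poisson (poisson (kinetic m) (pairPot G m j k)) (pairPot G m j i) w +
         poisson (poisson (kinetic m) (pairPot G m k i)) (pairPot G m k j) w) := by
  exact kick_error_decomposition_general (gradMom_kinetic m) (isPairInteraction_pairPot G m)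
    fun i j hij ↦ posDifferentiableAt_pairPot G m hij (norm_ne_zero_iff.1 (hr i j hij))
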